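/- arXiv:math/9912092 — 5 statements merged into one kernel-verified Lean document; each statement's English description precedes it below -/
import Mathlib

section
/- Let d, m ∈ ℚ and let r₁, …, r_s ∈ ℚ be a finite family with Σᵢ rᵢ = d − m. Write p_j = Σᵢ rᵢ^j for j = 3, 4, 5. Let Q ∈ ℚ[H] be the unique polynomial with Q(0) = 0 whose derivative equals −(m³/2)·e(−dH)·H²·∏ᵢ(1 + rᵢH + rᵢ²H²/2). Then Q ≡ −( m³H³/6 − m⁴H⁴/8 + m⁵H⁵/20 − m³(m³ + p₃)H⁶/72 + m³(m⁴ + 4m·p₃ + 3p₄)H⁷/336 − m³(m⁵ + 10m²·p₃ + 15m·p₄ + 6p₅)H⁸/1920 ) (mod H⁹). (This is the explicit expansion asserted in Proposition 3.1 of the paper, giving the correction term to the adjusted predegree polynomial due to a line of multiplicity m in a degree-d plane curve.) -/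
open Polynomial

/-- The truncated exponential `e(dH) = ∑_{i=0}^{8} dⁱHⁱ/i!` in `ℚ[H]`. -/
noncomputable def eH (d : ℚ) : Polynomial ℚ :=
  ∑ i ∈ Finset.range 9, C (d ^ i / (Nat.factorial i : ℚ)) * X ^ i

/-!
Since `d = m + ∑ rᵢ`, the factor `e^{-dH}` splits as `e^{-mH} ∏ᵢ e^{-rᵢH}`. Each `e^{-rᵢH}` cancels
the truncated exponential `1 + rᵢH + rᵢ²H²/2` up to a remainder of order `H³`, so modulo `H⁶` the
product of these factors is `1` plus the sum of the remainders, in which the power sums `p₃`, `p₄`,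
`p₅` appear. Multiplying by `e^{-mH}` and integrating against `-(m³/2)H²` gives the expansion.
-/

theorem sq_dvd_prod_one_add_mul_sub {R ι : Type*} [CommRing R] (c : R) (f : ι → R) (s : Finset ι) :
    c ^ 2 ∣ ∏ i ∈ s, (1 + c * f i) - (1 + c * ∑ i ∈ s, f i) := by
  classical
  induction s using Finset.induction_on with
  | empty => simp
  | insert a s ha ih =>
    rw [Finset.prod_insert ha, Finset.sum_insert ha]
    obtain ⟨g, hg⟩ := ih
    exact ⟨(1 + c * f a) * g + f a * ∑ i ∈ s, f i, by linear_combination (1 + c * f a) * hg⟩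

theorem coeff_trunc_mul {R : Type*} [CommSemiring R] {k N : ℕ} (hk : k < N) (f : PowerSeries R)
    (p : R[X]) :
    (PowerSeries.trunc N f * p).coeff k = PowerSeries.coeff k (f * (p : PowerSeries R)) := by
  rw [← Polynomial.coeff_coe, Polynomial.coe_mul, ← PowerSeries.coeff_coe_trunc_of_lt hk,
    PowerSeries.trunc_trunc_mul, PowerSeries.coeff_coe_trunc_of_lt hk]

section RationalAlgebra

open Nat (factorial)
open PowerSeries (rescale exp trunc)
open scoped PowerSeries

variable {A ι : Type*} [CommRing A] [Algebra ℚ A]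

theorem coeff_rescale_exp (a : A) (k : ℕ) :
    PowerSeries.coeff k (rescale a (exp A)) = (1 / (factorial k : ℚ)) • a ^ k := by
  rw [PowerSeries.coeff_rescale, PowerSeries.coeff_exp, Algebra.smul_def, mul_comm]

theorem rescale_sum_exp (s : Finset ι) (a : ι → A) :
    rescale (∑ i ∈ s, a i) (exp A) = ∏ i ∈ s, rescale (a i) (exp A) := by
  classical
  induction s using Finset.induction_on with
  | empty => simp
  | insert i s hi ih =>
    rw [Finset.sum_insert hi, Finset.prod_insert hi, ← ih, PowerSeries.exp_mul_exp_eq_exp_add]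

theorem coeff_rescale_neg_exp (a : A) (k : ℕ) :
    PowerSeries.coeff k (rescale (-a) (exp A)) = ((-1) ^ k / (factorial k : ℚ)) • a ^ k := by
  rw [coeff_rescale_exp, neg_pow]
  algebra

/-- The series `T` with `e^{-aX} ∑_{i ≤ n} aⁱXⁱ/i! = 1 + Xⁿ⁺¹ T`: what remains when `e^{-aX}`
cancels the exponential series truncated after degree `n`. It is given by its coefficients. -/
noncomputable def expTruncRemainder (n : ℕ) (a : A) : A⟦X⟧ :=
  PowerSeries.mk fun j =>
    ((-1) ^ (j + 1) / (factorial n * factorial j * (n + 1 + j)) : ℚ) • a ^ (n + 1 + j)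

theorem one_add_X_mul_expTruncRemainder_zero (a : A) :
    1 + PowerSeries.X * expTruncRemainder 0 a = rescale (-a) (exp A) := by
  ext (_ | j)
  · simp
  · rw [map_add, PowerSeries.coeff_succ_X_mul, coeff_rescale_neg_exp, expTruncRemainder,
      PowerSeries.coeff_mk, PowerSeries.coeff_one, if_neg j.succ_ne_zero, Nat.factorial_succ,
      zero_add, zero_add, add_comm 1 j]
    congr 1
    push_cast [Nat.factorial_zero]
    ring

theorem X_mul_expTruncRemainder_succ (n : ℕ) (a : A) :
    PowerSeries.X * expTruncRemainder (n + 1) a = expTruncRemainder n a +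
      rescale (-a) (exp A) * PowerSeries.C ((1 / (factorial (n + 1) : ℚ)) • a ^ (n + 1)) := by
  ext (_ | j)
  · have cancel : (-1) ^ (0 + 1) / (factorial n * factorial 0 * (n + 1 + (0 : ℕ)) : ℚ) +
        (-1) ^ 0 / (factorial 0 : ℚ) * (1 / (factorial (n + 1) : ℚ)) = 0 := by
      rw [Nat.factorial_succ]
      push_cast [Nat.factorial_zero]
      field_simp
      ring
    rw [map_add, PowerSeries.coeff_zero_X_mul, PowerSeries.coeff_mul_C, coeff_rescale_neg_exp,
      expTruncRemainder, PowerSeries.coeff_mk, smul_mul_smul_comm, ← pow_add, zero_add (n + 1),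
      add_zero (n + 1), ← add_smul, cancel, zero_smul]
  · rw [map_add, PowerSeries.coeff_succ_X_mul, PowerSeries.coeff_mul_C, coeff_rescale_neg_exp,
      expTruncRemainder, expTruncRemainder, PowerSeries.coeff_mk, PowerSeries.coeff_mk,
      smul_mul_smul_comm, ← pow_add, add_comm (j + 1) (n + 1), ← add_assoc (n + 1) j,
      add_right_comm (n + 1) 1 j, ← add_smul, Nat.factorial_succ, Nat.factorial_succ]
    congr 1
    push_cast
    field_simp
    ring

theorem rescale_neg_exp_mul_trunc_rescale_exp (n : ℕ) (a : A) :
    rescale (-a) (exp A) * (trunc (n + 1) (rescale a (exp A)) : A⟦X⟧) =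
      1 + PowerSeries.X ^ (n + 1) * expTruncRemainder n a := by
  induction n with
  | zero => simp [one_add_X_mul_expTruncRemainder_zero]
  | succ n ih =>
    rw [PowerSeries.trunc_succ, coeff_rescale_exp, Polynomial.coe_add, mul_add, ih,
      Polynomial.coe_monomial, PowerSeries.monomial_eq_C_mul_X_pow]
    linear_combination
      -(PowerSeries.X : A⟦X⟧) ^ (n + 1) * X_mul_expTruncRemainder_succ n a

theorem X_pow_dvd_exp_mul_prod_trunc_exp_sub (n : ℕ) (s : Finset ι) (m : A) (r : ι → A) :
    (PowerSeries.X : A⟦X⟧) ^ (2 * (n + 1)) ∣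
      rescale (-(m + ∑ i ∈ s, r i)) (exp A) *
          ∏ i ∈ s, (trunc (n + 1) (rescale (r i) (exp A)) : A⟦X⟧) -
        rescale (-m) (exp A) *
          (1 + PowerSeries.X ^ (n + 1) * ∑ i ∈ s, expTruncRemainder n (r i)) := by
  rw [neg_add, ← PowerSeries.exp_mul_exp_eq_exp_add, ← Finset.sum_neg_distrib, rescale_sum_exp,
    mul_assoc, ← Finset.prod_mul_distrib, ← mul_sub, mul_comm 2, pow_mul]
  simp_rw [rescale_neg_exp_mul_trunc_rescale_exp]
  exact (sq_dvd_prod_one_add_mul_sub _ _ _).mul_left _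

theorem coeff_rescale_neg_exp_mul_one_add (n k : ℕ) (s : Finset ι) (m : A) (r : ι → A) :
    PowerSeries.coeff k (rescale (-m) (exp A) *
        (1 + PowerSeries.X ^ (n + 1) * ∑ i ∈ s, expTruncRemainder n (r i))) =
      ((-1) ^ k / (factorial k : ℚ)) • m ^ k +
        ∑ j ∈ Finset.range (k - n),
          ((-1) ^ (k - n) / (factorial n * factorial j * factorial (k - n - 1 - j) *
            (k - j : ℕ)) : ℚ) • (m ^ j * ∑ i ∈ s, r i ^ (k - j)) := by
  rw [mul_add, mul_one, mul_left_comm, map_add, PowerSeries.coeff_X_pow_mul',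
    coeff_rescale_neg_exp, PowerSeries.coeff_mul]
  congr 1
  split_ifs with hk
  · obtain ⟨l, rfl⟩ := Nat.exists_eq_add_of_le hk
    rw [Nat.add_sub_cancel_left, show n + 1 + l - n = l + 1 by lia,
      Finset.Nat.sum_antidiagonal_eq_sum_range_succ_mk]
    refine Finset.sum_congr rfl fun j hj => ?_
    obtain ⟨t, rfl⟩ := Nat.exists_eq_add_of_le (Finset.mem_range_succ_iff.mp hj)
    rw [Nat.add_sub_cancel_left, Nat.add_sub_cancel, Nat.add_sub_cancel_left,
      show n + 1 + (j + t) - j = n + 1 + t by lia]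
    simp only [coeff_rescale_neg_exp, map_sum, expTruncRemainder, PowerSeries.coeff_mk,
      ← Finset.smul_sum, smul_mul_smul_comm]
    congr 1
    push_cast
    field_simp
    ring
  · rw [Nat.sub_eq_zero_of_le (by lia), Finset.range_zero, Finset.sum_empty]

theorem coeff_rescale_neg_exp_mul_one_add_of_lt_six {k : ℕ} (hk : k < 6) (s : Finset ι) (m : A)
    (r : ι → A) :
    PowerSeries.coeff k (rescale (-m) (exp A) *
        (1 + PowerSeries.X ^ 3 * ∑ i ∈ s, expTruncRemainder 2 (r i))) =
      (1 - C m * X + C ((1 / 2 : ℚ) • m ^ 2) * X ^ 2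
        - C ((1 / 6 : ℚ) • (m ^ 3 + ∑ i ∈ s, r i ^ 3)) * X ^ 3
        + C ((1 / 24 : ℚ) •
            (m ^ 4 + 4 * m * ∑ i ∈ s, r i ^ 3 + 3 * ∑ i ∈ s, r i ^ 4)) * X ^ 4
        - C ((1 / 120 : ℚ) •
            (m ^ 5 + 10 * m ^ 2 * ∑ i ∈ s, r i ^ 3 + 15 * m * ∑ i ∈ s, r i ^ 4
              + 6 * ∑ i ∈ s, r i ^ 5)) * X ^ 5).coeff k := by
  rw [coeff_rescale_neg_exp_mul_one_add]
  simp only [coeff_add, coeff_sub, coeff_C_mul, coeff_X_pow, coeff_X, coeff_one]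
  interval_cases k
  all_goals
    simp only [Finset.sum_range_succ, Finset.sum_range_zero, Nat.factorial, Nat.reduceSub,
      Nat.reduceEqDiff, ↓reduceIte]
    algebra

theorem coeff_trunc_exp_mul_prod_trunc_exp {n N k : ℕ} (hk : k < 2 * (n + 1)) (hkN : k < N)
    (s : Finset ι) (m : A) (r : ι → A) :
    (trunc N (rescale (-(m + ∑ i ∈ s, r i)) (exp A)) *
        ∏ i ∈ s, trunc (n + 1) (rescale (r i) (exp A))).coeff k =
      PowerSeries.coeff k (rescale (-m) (exp A) *
        (1 + PowerSeries.X ^ (n + 1) * ∑ i ∈ s, expTruncRemainder n (r i))) := by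
  rw [coeff_trunc_mul hkN, ← Polynomial.coeToPowerSeries.ringHom_apply, map_prod, ← sub_eq_zero,
    ← map_sub]
  exact PowerSeries.X_pow_dvd_iff.mp (X_pow_dvd_exp_mul_prod_trunc_exp_sub n s m r) k hk

theorem coeff_succ_eq_smul_coeff_derivative (p : A[X]) (k : ℕ) :
    p.coeff (k + 1) = (1 / (k + 1 : ℚ)) • (derivative p).coeff k := by
  rw [coeff_derivative, mul_comm, ← Nat.cast_add_one, ← Nat.cast_add_one, ← nsmul_eq_mul,
    ← Nat.cast_smul_eq_nsmul ℚ, smul_smul, one_div_mul_cancel (Nat.cast_ne_zero.mpr k.succ_ne_zero),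
    one_smul]

theorem trunc_three_rescale_exp (a : A) :
    trunc 3 (rescale a (exp A)) = 1 + C a * X + C ((1 / 2 : ℚ) • a ^ 2) * X ^ 2 := by
  simp only [PowerSeries.trunc_succ, coeff_rescale_exp, PowerSeries.trunc_zero',
    ← C_mul_X_pow_eq_monomial]
  simp [Nat.factorial]

theorem stmt_0_general [Fintype ι] {N : ℕ} (hN : 6 ≤ N) (d m : A) (r : ι → A)
    (hsum : ∑ i, r i = d - m) (Q : A[X]) (hQ0 : Q.coeff 0 = 0)
    (hQder : derivative Q =
      C (-((1 / 2 : ℚ) • m ^ 3)) * trunc N (rescale (-d) (exp A)) * X ^ 2 *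
        ∏ i, trunc 3 (rescale (r i) (exp A))) :
    ∀ k ≤ 8, Q.coeff k =
      (-(C ((1 / 6 : ℚ) • m ^ 3) * X ^ 3 - C ((1 / 8 : ℚ) • m ^ 4) * X ^ 4
        + C ((1 / 20 : ℚ) • m ^ 5) * X ^ 5
        - C ((1 / 72 : ℚ) • (m ^ 3 * (m ^ 3 + ∑ i, r i ^ 3))) * X ^ 6
        + C ((1 / 336 : ℚ) •
            (m ^ 3 * (m ^ 4 + 4 * m * ∑ i, r i ^ 3 + 3 * ∑ i, r i ^ 4))) * X ^ 7
        - C ((1 / 1920 : ℚ) •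
            (m ^ 3 * (m ^ 5 + 10 * m ^ 2 * ∑ i, r i ^ 3 + 15 * m * ∑ i, r i ^ 4
              + 6 * ∑ i, r i ^ 5))) * X ^ 8)).coeff k := by
  set G := trunc N (rescale (-d) (exp A)) * ∏ i, trunc 3 (rescale (r i) (exp A)) with hG
  have hQder' : derivative Q = C (-((1 / 2 : ℚ) • m ^ 3)) * (X ^ 2 * G) := by rw [hQder, hG]; ring
  have coeff_G {j : ℕ} (hj : j < 6) :=
    (coeff_trunc_exp_mul_prod_trunc_exp (n := 2) hj (hj.trans_le hN) Finset.univ m r).trans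
      (coeff_rescale_neg_exp_mul_one_add_of_lt_six hj Finset.univ m r)
  rw [hsum, add_sub_cancel, ← hG] at coeff_G
  rintro (_ | j) hj
  · simp [hQ0]
  · replace hj : j < 8 := hj
    rw [coeff_succ_eq_smul_coeff_derivative, hQder', coeff_C_mul, coeff_X_pow_mul']
    simp only [coeff_neg, coeff_add, coeff_sub, coeff_C_mul, coeff_X_pow]
    interval_cases j
    all_goals
      simp only [Nat.reduceAdd, Nat.reduceSub, Nat.reduceLeDiff, Nat.reduceEqDiff, Nat.reduceLT,
        ↓reduceIte, coeff_G, coeff_add, coeff_sub, coeff_C_mul, coeff_X_pow, coeff_X, coeff_one]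
      algebra

end RationalAlgebra

theorem eH_eq_trunc_rescale_exp (d : ℚ) :
    eH d = PowerSeries.trunc 9 (PowerSeries.rescale d (PowerSeries.exp ℚ)) := by
  ext k
  simp only [eH, finsetSum_coeff, coeff_C_mul_X_pow, PowerSeries.coeff_trunc, coeff_rescale_exp]
  simp [div_eq_inv_mul]

/-- Proposition 3.1: the explicit expansion, modulo `H⁹`, of the antiderivative with zero
constant term of `−(m³/2)·e(−dH)·H²·∏ᵢ(1 + rᵢH + rᵢ²H²/2)`. -/
theorem stmt_0 {ι : Type*} [Fintype ι] (d m : ℚ) (r : ι → ℚ)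
    (hsum : ∑ i, r i = d - m)
    (Q : Polynomial ℚ) (hQ0 : Q.coeff 0 = 0)
    (hQder : derivative Q =
      C (-(m ^ 3 / 2)) * eH (-d) * X ^ 2 *
        ∏ i, (1 + C (r i) * X + C ((r i) ^ 2 / 2) * X ^ 2)) :
    ∀ k ≤ 8, Q.coeff k =
      (-(C (m ^ 3 / 6) * X ^ 3 - C (m ^ 4 / 8) * X ^ 4 + C (m ^ 5 / 20) * X ^ 5
        - C (m ^ 3 * (m ^ 3 + ∑ i, (r i) ^ 3) / 72) * X ^ 6
        + C (m ^ 3 * (m ^ 4 + 4 * m * (∑ i, (r i) ^ 3) + 3 * (∑ i, (r i) ^ 4)) / 336) * X ^ 7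
        - C (m ^ 3 * (m ^ 5 + 10 * m ^ 2 * (∑ i, (r i) ^ 3) + 15 * m * (∑ i, (r i) ^ 4)
            + 6 * (∑ i, (r i) ^ 5)) / 1920) * X ^ 8)).coeff k := by
  have hQder' : derivative Q = C (-((1 / 2 : ℚ) • m ^ 3)) *
      PowerSeries.trunc 9 (PowerSeries.rescale (-d) (PowerSeries.exp ℚ)) * X ^ 2 *
        ∏ i, PowerSeries.trunc 3 (PowerSeries.rescale (r i) (PowerSeries.exp ℚ)) := by
    rw [hQder, eH_eq_trunc_rescale_exp]
    simp only [trunc_three_rescale_exp, smul_eq_mul, one_div_mul_eq_div]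
  simpa only [smul_eq_mul, one_div_mul_eq_div] using
    stmt_0_general (by norm_num) d m r hsum Q hQ0 hQder'
end

section
/- Let m₁, …, m_s ∈ ℚ be a finite family, let d = Σᵢ mᵢ, and write p_j = Σᵢ mᵢ^j for j = 3, 4, 5, 7, 8. Then e(dH)·( 1 − [ p₃H³/6 − p₄H⁴/8 + p₅H⁵/20 − p₃²H⁶/72 + (7p₃p₄ − 6p₇)H⁷/336 − (15p₄² + 16p₃p₅ − 30p₈)H⁸/1920 ] ) ≡ ∏ᵢ (1 + mᵢH + mᵢ²H²/2) (mod H⁹). (This is the computation of Example 3.1 of the paper: the adjusted predegree polynomial of a union of lines with multiplicities mᵢ, no three meeting in a point, is the product of the individual factors.) -/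
open Polynomial

/-!
Modulo `H⁹` one has `log (1 + y + y²/2) = y - y³/6 + y⁴/8 - y⁵/20 + y⁷/56 - y⁸/64` for `y = mH`.
Beyond its linear term this logarithm is divisible by `H³`, so summing over the multiplicities and
exponentiating, only `1 + q + q²/2` survives of the exponential of the sum `q` of the nonlinear
parts, while the linear parts contribute `e(dH)`. Computing with nilpotent elements of a
commutative `ℚ`-algebra makes these exponentials finite sums.
-/

section NilpotentAlgebra

variable {A ι : Type*} [CommRing A] [Algebra ℚ A]

theorem exp_sum_of_isNilpotent {s : Finset ι} {f : ι → A} (hf : ∀ i ∈ s, IsNilpotent (f i)) :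
    IsNilpotent.exp (∑ i ∈ s, f i) = ∏ i ∈ s, IsNilpotent.exp (f i) := by
  classical
  induction s using Finset.induction_on with
  | empty => simp only [Finset.sum_empty, Finset.prod_empty, IsNilpotent.exp_zero]
  | insert a s ha ih =>
    rw [Finset.forall_mem_insert] at hf
    rw [Finset.sum_insert ha, Finset.prod_insert ha, ← ih hf.2]
    exact IsNilpotent.exp_add_of_commute (Commute.all _ _) hf.1 (isNilpotent_sum hf.2)

theorem exp_eq_of_pow_three_eq_zero {q : A} (hq : q ^ 3 = 0) :
    IsNilpotent.exp q = 1 + q + (1 / 2 : ℚ) • q ^ 2 := by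
  simp [IsNilpotent.exp_eq_sum hq, Finset.sum_range_succ]

/-- The sum `∑ᵢ (log (1 + mᵢx + (mᵢx)²/2) - mᵢx)`, truncated after degree eight in `x` and expressed
through the power sums `p j = ∑ᵢ mᵢʲ`. The sequence `p` is arbitrary, which makes the expression
additive in `p`; the constant sequence `1` gives the logarithm of the single factor
`1 + x + x²/2`. -/
noncomputable def logTail (p : ℕ → A) (x : A) : A :=
  -(1 / 6 : ℚ) • (p 3 * x ^ 3) + (1 / 8 : ℚ) • (p 4 * x ^ 4) - (1 / 20 : ℚ) • (p 5 * x ^ 5)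
    + (1 / 56 : ℚ) • (p 7 * x ^ 7) - (1 / 64 : ℚ) • (p 8 * x ^ 8)

/-- The bracket subtracted from `1` in the adjusted predegree polynomial, as a function of the
power sums `p j`. -/
noncomputable def predegreeBracket (p : ℕ → A) (x : A) : A :=
  (1 / 6 : ℚ) • (p 3 * x ^ 3) - (1 / 8 : ℚ) • (p 4 * x ^ 4) + (1 / 20 : ℚ) • (p 5 * x ^ 5)
    - (1 / 72 : ℚ) • (p 3 ^ 2 * x ^ 6) + (1 / 336 : ℚ) • ((7 * p 3 * p 4 - 6 * p 7) * x ^ 7)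
    - (1 / 1920 : ℚ) • ((15 * p 4 ^ 2 + 16 * p 3 * p 5 - 30 * p 8) * x ^ 8)

theorem pow_three_dvd_logTail (p : ℕ → A) (x : A) : x ^ 3 ∣ logTail p x := by
  refine ⟨-(1 / 6 : ℚ) • p 3 + (1 / 8 : ℚ) • (p 4 * x) - (1 / 20 : ℚ) • (p 5 * x ^ 2)
    + (1 / 56 : ℚ) • (p 7 * x ^ 4) - (1 / 64 : ℚ) • (p 8 * x ^ 5), ?_⟩
  unfold logTail
  algebra

theorem logTail_pow_three_eq_zero (p : ℕ → A) {x : A} (hx : x ^ 9 = 0) : logTail p x ^ 3 = 0 := by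
  have hdvd : (x ^ 3) ^ 3 ∣ logTail p x ^ 3 := pow_dvd_pow_of_dvd (pow_three_dvd_logTail p x) 3
  rwa [← pow_mul, hx, zero_dvd_iff] at hdvd

theorem isNilpotent_logTail (p : ℕ → A) {x : A} (hx : IsNilpotent x) :
    IsNilpotent (logTail p x) := by
  obtain ⟨q, hq⟩ := pow_three_dvd_logTail p x
  rw [hq]
  exact (Commute.all _ _).isNilpotent_mul_right (hx.pow_succ 2)

theorem logTail_sum (s : Finset ι) (p : ι → ℕ → A) (x : A) :
    logTail (∑ i ∈ s, p i) x = ∑ i ∈ s, logTail (p i) x := by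
  simp only [logTail, Finset.sum_apply, Finset.sum_mul, Finset.smul_sum, Finset.sum_add_distrib,
    Finset.sum_sub_distrib]

theorem logTail_pow (m x : A) : logTail (m ^ ·) x = logTail 1 (m * x) := by
  simp only [logTail, Pi.one_apply, one_mul, mul_pow]

theorem exp_logTail (p : ℕ → A) {x : A} (hx : x ^ 9 = 0) :
    IsNilpotent.exp (logTail p x) = 1 - predegreeBracket p x := by
  rw [exp_eq_of_pow_three_eq_zero (logTail_pow_three_eq_zero p hx)]
  unfold logTail predegreeBracket
  -- The factor of `hx` is `q ^ 2 / 2`, for `q = logTail p x`, without its terms below degree nine.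
  linear_combination (norm := algebra) (-(1 / 160 : ℚ) • (p 4 * p 5)
    + ((1 / 800 : ℚ) • p 5 ^ 2 - (1 / 336 : ℚ) • (p 3 * p 7)) * x
    + ((1 / 384 : ℚ) • (p 3 * p 8) + (1 / 448 : ℚ) • (p 4 * p 7)) * x ^ 2
    - ((1 / 512 : ℚ) • (p 4 * p 8) + (1 / 1120 : ℚ) • (p 5 * p 7)) * x ^ 3
    + (1 / 1280 : ℚ) • (p 5 * p 8) * x ^ 4
    + (1 / 2 : ℚ) • ((1 / 56 : ℚ) • p 7 - (1 / 64 : ℚ) • (p 8 * x)) ^ 2 * x ^ 5) * hx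

theorem exp_mul_exp_logTail_one {y : A} (hy : y ^ 9 = 0) :
    IsNilpotent.exp y * IsNilpotent.exp (logTail 1 y) = 1 + y + (1 / 2 : ℚ) • y ^ 2 := by
  rw [exp_logTail 1 hy, IsNilpotent.exp_eq_sum hy]
  simp only [predegreeBracket, Pi.one_apply, Finset.sum_range_succ, Finset.sum_range_zero,
    Nat.factorial]
  push_cast
  -- The factor of `hy` collects the terms of degree at least nine of the product on the left.
  linear_combination (norm := algebra) ((1 / 13440 : ℚ) • 1 + (3 / 44800 : ℚ) • y
    + (1 / 33600 : ℚ) • y ^ 2 + (17 / 1814400 : ℚ) • y ^ 3 + (1 / 580608 : ℚ) • y ^ 4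
    + (97 / 203212800 : ℚ) • y ^ 5 + (1 / 33868800 : ℚ) • y ^ 6 + (1 / 77414400 : ℚ) • y ^ 7) * hy

theorem map_predegreeBracket {B : Type*} [CommRing B] [Algebra ℚ B] (f : A →+* B) (p : ℕ → A)
    (x : A) : f (predegreeBracket p x) = predegreeBracket (f ∘ p) (f x) := by
  simp only [predegreeBracket, map_add, map_sub, map_rat_smul, map_mul, map_pow, map_ofNat,
    Function.comp_apply]

theorem exp_mul_one_sub_predegreeBracket {x : A} (hx : x ^ 9 = 0) (s : Finset ι) (m : ι → A) :
    IsNilpotent.exp ((∑ i ∈ s, m i) * x) * (1 - predegreeBracket (∑ i ∈ s, (m i ^ ·)) x) =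
      ∏ i ∈ s, (1 + m i * x + (1 / 2 : ℚ) • (m i * x) ^ 2) := by
  have hpow (i : ι) : (m i * x) ^ 9 = 0 := by rw [mul_pow, hx, mul_zero]
  have hlin : IsNilpotent.exp ((∑ i ∈ s, m i) * x) = ∏ i ∈ s, IsNilpotent.exp (m i * x) := by
    rw [Finset.sum_mul, exp_sum_of_isNilpotent fun i _ => ⟨9, hpow i⟩]
  have htail : 1 - predegreeBracket (∑ i ∈ s, (m i ^ ·)) x =
      ∏ i ∈ s, IsNilpotent.exp (logTail 1 (m i * x)) := by
    rw [← exp_logTail _ hx, logTail_sum,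
      exp_sum_of_isNilpotent fun i _ => isNilpotent_logTail _ ⟨9, hx⟩]
    simp only [logTail_pow]
  rw [hlin, htail, ← Finset.prod_mul_distrib]
  exact Finset.prod_congr rfl fun i _ => exp_mul_exp_logTail_one (hpow i)

end NilpotentAlgebra

theorem coeff_eq_of_mk_X_pow_eq {R : Type*} [CommRing R] {n : ℕ} {p q : R[X]}
    (h : AdjoinRoot.mk (X ^ n) p = AdjoinRoot.mk (X ^ n) q) {k : ℕ} (hk : k < n) :
    p.coeff k = q.coeff k := by
  rw [AdjoinRoot.mk_eq_mk, X_pow_dvd_iff] at h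
  simpa only [coeff_sub, sub_eq_zero] using h k hk

theorem root_X_pow_pow_eq_zero (R : Type*) [CommRing R] (n : ℕ) :
    AdjoinRoot.root (X ^ n : R[X]) ^ n = 0 := by
  rw [← AdjoinRoot.mk_X, ← map_pow, AdjoinRoot.mk_self]

theorem mk_trunc_rescale_exp {R : Type*} [CommRing R] [Algebra ℚ R] (n : ℕ) (d : R) :
    AdjoinRoot.mk (X ^ n) ((PowerSeries.rescale d (PowerSeries.exp R)).trunc n) =
      IsNilpotent.exp (AdjoinRoot.of (X ^ n) d * AdjoinRoot.root (X ^ n)) := by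
  have hpow : (AdjoinRoot.of (X ^ n) d * AdjoinRoot.root (X ^ n)) ^ n = 0 := by
    rw [mul_pow, root_X_pow_pow_eq_zero, mul_zero]
  rw [IsNilpotent.exp_eq_sum hpow, ← AdjoinRoot.aeval_eq, aeval_def,
    PowerSeries.eval₂_trunc_eq_sum_range]
  refine Finset.sum_congr rfl fun i _ => ?_
  rw [PowerSeries.coeff_rescale, PowerSeries.coeff_exp, one_div, mul_comm (d ^ i),
    ← Algebra.smul_def (A := R), map_rat_smul, map_pow, mul_pow, smul_mul_assoc,
    AdjoinRoot.algebraMap_eq]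

theorem trunc_rescale_exp_eq_eH (d : ℚ) :
    (PowerSeries.rescale d (PowerSeries.exp ℚ)).trunc 9 = eH d := by
  simp only [eH, PowerSeries.trunc_apply, Nat.Ico_zero_eq_range, C_mul_X_pow_eq_monomial,
    PowerSeries.coeff_rescale, PowerSeries.coeff_exp, Algebra.algebraMap_self, RingHom.id_apply,
    mul_one_div]

theorem predegreeBracket_C_X (p : ℕ → ℚ) :
    predegreeBracket (fun j => C (p j)) X =
      C (p 3 / 6) * X ^ 3 - C (p 4 / 8) * X ^ 4 + C (p 5 / 20) * X ^ 5
        - C (p 3 ^ 2 / 72) * X ^ 6 + C ((7 * p 3 * p 4 - 6 * p 7) / 336) * X ^ 7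
        - C ((15 * p 4 ^ 2 + 16 * p 3 * p 5 - 30 * p 8) / 1920) * X ^ 8 := by
  unfold predegreeBracket
  polynomial

theorem stmt_6_general {R ι : Type*} [CommRing R] [Algebra ℚ R] (s : Finset ι) (m : ι → R)
    (d : R) (hd : d = ∑ i ∈ s, m i) : ∀ k ≤ 8,
    ((PowerSeries.rescale d (PowerSeries.exp R)).trunc 9
      * (1 - predegreeBracket (fun j => C (∑ i ∈ s, m i ^ j)) X)).coeff k
      = (∏ i ∈ s, (1 + C (m i) * X + (1 / 2 : ℚ) • (C (m i) * X) ^ 2)).coeff k := by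
  intro k hk
  refine coeff_eq_of_mk_X_pow_eq (n := 9) ?_ (Nat.lt_succ_of_le hk)
  have hpsum : (∑ i ∈ s, (AdjoinRoot.of (X ^ 9) (m i) ^ ·)) =
      AdjoinRoot.mk (X ^ 9) ∘ fun j => C (∑ i ∈ s, m i ^ j) := by
    ext j
    simp only [Finset.sum_apply, Function.comp_apply, AdjoinRoot.mk_C, map_sum, map_pow]
  have h := exp_mul_one_sub_predegreeBracket (root_X_pow_pow_eq_zero R 9) s
    fun i => AdjoinRoot.of (X ^ 9) (m i)
  simpa only [map_mul, map_sub, map_add, map_one, map_prod, map_pow, map_rat_smul,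
    mk_trunc_rescale_exp, map_predegreeBracket, AdjoinRoot.mk_C, AdjoinRoot.mk_X, hd, map_sum,
    hpsum] using h

/-- Example 3.1: the adjusted predegree polynomial of a union of lines with multiplicities
`mᵢ`, no three meeting in a point, is the product of the individual factors, modulo `H⁹`. -/
theorem stmt_6 {ι : Type*} [Fintype ι] (m : ι → ℚ) (d : ℚ) (hd : d = ∑ i, m i) :
    ∀ k ≤ 8,
      (eH d * (1 - (C ((∑ i, (m i) ^ 3) / 6) * X ^ 3 - C ((∑ i, (m i) ^ 4) / 8) * X ^ 4
          + C ((∑ i, (m i) ^ 5) / 20) * X ^ 5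
          - C ((∑ i, (m i) ^ 3) ^ 2 / 72) * X ^ 6
          + C ((7 * (∑ i, (m i) ^ 3) * (∑ i, (m i) ^ 4) - 6 * (∑ i, (m i) ^ 7)) / 336) * X ^ 7
          - C ((15 * (∑ i, (m i) ^ 4) ^ 2 + 16 * (∑ i, (m i) ^ 3) * (∑ i, (m i) ^ 5)
              - 30 * (∑ i, (m i) ^ 8)) / 1920) * X ^ 8))).coeff k
      = (∏ i, (1 + C (m i) * X + C ((m i) ^ 2 / 2) * X ^ 2)).coeff k := by
  intro k hk
  have hquad (a : ℚ) : C (a ^ 2 / 2) * X ^ 2 = (1 / 2 : ℚ) • (C a * X) ^ 2 := by polynomial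
  simpa only [hquad, trunc_rescale_exp_eq_eH, predegreeBracket_C_X] using
    stmt_6_general Finset.univ m d hd k hk
end

section
/- For every natural number d, one has (viewing d as a rational number in the coefficients) e(dH)·( 1 − dH³/6 + dH⁴/8 − dH⁵/20 − d²(d−3)(d³ + 3d² − 11d + 12)H⁶/720 + d³(2d⁴ − 35d² + 70d − 42)H⁷/1680 − d⁴(d⁴ − 16d² + 30d − 16)H⁸/1920 ) ≡ 1 + dH + d²H²/2 + d(d−1)(d+1)H³/6 + d(d−1)(d² + d − 3)H⁴/24 + d(d−1)(d−2)(d² + 3d − 3)H⁵/120 (mod H⁹); moreover, this last polynomial agrees with (1 + H + H²/2)^d in every coefficient of Hⁱ for i ≤ 5. (This is the computation of Example 3.3 of the paper: the adjusted predegree polynomial of a star of d distinct concurrent lines.) -/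
open Polynomial

/-!
Write `1 + H + H²/2 = 1 + H(1 + H/2)`. In the binomial expansion of its `d`-th power the summand
`binom(d, i) Hⁱ(1 + H/2)ⁱ` starts in degree `i`, so the coefficient of `Hᵏ` only involves `i ≤ k`
and is a polynomial in `d`. The product with `e(dH)` amounts to one polynomial identity in `d` for
each degree, valid for all rational `d`. The correction factor originates in
`e^{-H}(1 + H + H²/2) = 1 - H³/6 + H⁴/8 - H⁵/20 + O(H⁶)`: it is the `d`-th power of this series up
to `H⁵`, and its last three terms make the product vanish in degrees `6`, `7` and `8`.
-/

section Semiring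

variable {R : Type*} [Semiring R]

theorem coeff_one_add_X_mul_pow (p : R[X]) (n k : ℕ) :
    ((1 + X * p) ^ n).coeff k =
      ∑ i ∈ Finset.range (k + 1), (n.choose i : R) * (p ^ i).coeff (k - i) := by
  let term (i : ℕ) : R := (X ^ i * p ^ i * (n.choose i : R[X])).coeff k
  have term_eq (i : ℕ) :
      term i = if i ≤ k then (n.choose i : R) * (p ^ i).coeff (k - i) else 0 := by
    simp only [term, mul_assoc, coeff_X_pow_mul', coeff_mul_natCast, Nat.cast_comm]
  have term_eq_zero_of_exponent_lt (i : ℕ) (hi : n + 1 ≤ i) : term i = 0 := by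
    simp only [term_eq, Nat.choose_eq_zero_of_lt hi, Nat.cast_zero, zero_mul, ite_self]
  have term_eq_zero_of_degree_lt (i : ℕ) (hi : k + 1 ≤ i) : term i = 0 := by
    rw [term_eq, if_neg (Nat.not_le.mpr hi)]
  calc
    ((1 + X * p) ^ n).coeff k = ∑ i ∈ Finset.range (n + 1), term i := by
      rw [add_comm, (Commute.one_right _).add_pow]
      simp only [one_pow, mul_one, (commute_X p).mul_pow, finsetSum_coeff, term]
    _ = ∑ i ∈ Finset.range (max n k + 1), term i :=
      (Finset.eventually_constant_sum term_eq_zero_of_exponent_lt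
        (Nat.succ_le_succ (le_max_left n k))).symm
    _ = ∑ i ∈ Finset.range (k + 1), term i :=
      Finset.eventually_constant_sum term_eq_zero_of_degree_lt
        (Nat.succ_le_succ (le_max_right n k))
    _ = ∑ i ∈ Finset.range (k + 1), (n.choose i : R) * (p ^ i).coeff (k - i) :=
      Finset.sum_congr rfl fun i hi ↦ by
        rw [term_eq, if_pos (Finset.mem_range_succ_iff.mp hi)]

theorem coeff_one_add_C_mul_X_pow (a : R) (n k : ℕ) :
    ((1 + C a * X) ^ n).coeff k = (n.choose k : R) * a ^ k := by
  have coeff_C_pow_eq_zero (i : ℕ) (hi : i ∈ Finset.range k) :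
      (n.choose i : R) * (C a ^ i).coeff (k - i) = 0 := by
    rw [← C_pow, coeff_C_of_ne_zero (Nat.sub_ne_zero_of_lt (Finset.mem_range.mp hi)), mul_zero]
  rw [← X_mul, coeff_one_add_X_mul_pow, Finset.sum_range_succ,
    Finset.sum_eq_zero coeff_C_pow_eq_zero, zero_add, Nat.sub_self, ← C_pow, coeff_C_zero]

theorem coeff_one_add_X_add_C_mul_X_sq_pow (a : R) (n k : ℕ) :
    ((1 + X + C a * X ^ 2) ^ n).coeff k =
      ∑ i ∈ Finset.range (k + 1),
        (n.choose i : R) * ((i.choose (k - i) : R) * a ^ (k - i)) := by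
  have factorization : 1 + X + C a * X ^ 2 = 1 + X * (1 + C a * X) := by
    rw [mul_add, mul_one, ← add_assoc, X_mul, mul_assoc, sq]
  simp only [factorization, coeff_one_add_X_mul_pow, coeff_one_add_C_mul_X_pow]

end Semiring

theorem coeff_eH (d : ℚ) (k : ℕ) :
    (eH d).coeff k = if k < 9 then d ^ k / (Nat.factorial k : ℚ) else 0 := by
  simp only [eH, finsetSum_coeff, coeff_C_mul_X_pow, Finset.sum_ite_eq, Finset.mem_range]

/-- The adjusted predegree polynomial of a star of `d` distinct concurrent lines, with `d` extended
from `ℕ` to `ℚ`. -/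
noncomputable def starPredegree (d : ℚ) : ℚ[X] :=
  1 + C d * X + C (d ^ 2 / 2) * X ^ 2 + C (d * (d - 1) * (d + 1) / 6) * X ^ 3
    + C (d * (d - 1) * (d ^ 2 + d - 3) / 24) * X ^ 4
    + C (d * (d - 1) * (d - 2) * (d ^ 2 + 3 * d - 3) / 120) * X ^ 5

/-- The truncation at `H⁸` of `e(-dH)` times the adjusted predegree polynomial of a star of `d`
lines: the factor that corrects `e(dH)` to that polynomial. -/
noncomputable def starCorrection (d : ℚ) : ℚ[X] :=
  1 - C (d / 6) * X ^ 3 + C (d / 8) * X ^ 4 - C (d / 20) * X ^ 5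
    - C (d ^ 2 * (d - 3) * (d ^ 3 + 3 * d ^ 2 - 11 * d + 12) / 720) * X ^ 6
    + C (d ^ 3 * (2 * d ^ 4 - 35 * d ^ 2 + 70 * d - 42) / 1680) * X ^ 7
    - C (d ^ 4 * (d ^ 4 - 16 * d ^ 2 + 30 * d - 16) / 1920) * X ^ 8

theorem coeff_eH_mul_starCorrection (d : ℚ) {k : ℕ} (hk : k ≤ 8) :
    (eH d * starCorrection d).coeff k = (starPredegree d).coeff k := by
  simp only [starCorrection, starPredegree, mul_sub, mul_add, mul_one, mul_left_comm _ (C _),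
    coeff_sub, coeff_add, coeff_one, coeff_C_mul, coeff_X, coeff_mul_X_pow', coeff_eH]
  interval_cases k <;> norm_num [Nat.factorial] <;> ring

theorem coeff_starPredegree_eq_coeff_pow (d : ℕ) {k : ℕ} (hk : k ≤ 5) :
    (starPredegree d).coeff k = ((1 + X + C (1 / 2 : ℚ) * X ^ 2) ^ d).coeff k := by
  simp only [coeff_one_add_X_add_C_mul_X_sq_pow, Nat.cast_choose_eq_descPochhammer_div ℚ d,
    descPochhammer_eval_eq_prod_range, starPredegree, coeff_add, coeff_one, coeff_C_mul, coeff_X,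
    coeff_X_pow]
  interval_cases k <;>
    norm_num [Finset.sum_range_succ, Finset.prod_range_succ, Nat.factorial, Nat.choose] <;> ring

/-- Example 3.3: the adjusted predegree polynomial of a star of `d` distinct concurrent
lines, and its identification with the truncation of `(1 + H + H²/2)^d` at `H⁵`. -/
theorem stmt_7 (d : ℕ) :
    (∀ k ≤ 8,
      (eH (d : ℚ) * (1 - C ((d : ℚ) / 6) * X ^ 3 + C ((d : ℚ) / 8) * X ^ 4
          - C ((d : ℚ) / 20) * X ^ 5
          - C ((d : ℚ) ^ 2 * ((d : ℚ) - 3) * ((d : ℚ) ^ 3 + 3 * (d : ℚ) ^ 2 - 11 * (d : ℚ)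
              + 12) / 720) * X ^ 6
          + C ((d : ℚ) ^ 3 * (2 * (d : ℚ) ^ 4 - 35 * (d : ℚ) ^ 2 + 70 * (d : ℚ) - 42) / 1680)
            * X ^ 7
          - C ((d : ℚ) ^ 4 * ((d : ℚ) ^ 4 - 16 * (d : ℚ) ^ 2 + 30 * (d : ℚ) - 16) / 1920)
            * X ^ 8)).coeff k
      = (1 + C (d : ℚ) * X + C ((d : ℚ) ^ 2 / 2) * X ^ 2
          + C ((d : ℚ) * ((d : ℚ) - 1) * ((d : ℚ) + 1) / 6) * X ^ 3
          + C ((d : ℚ) * ((d : ℚ) - 1) * ((d : ℚ) ^ 2 + (d : ℚ) - 3) / 24) * X ^ 4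
          + C ((d : ℚ) * ((d : ℚ) - 1) * ((d : ℚ) - 2) * ((d : ℚ) ^ 2 + 3 * (d : ℚ) - 3) / 120)
            * X ^ 5).coeff k)
    ∧ (∀ k ≤ 5,
      (1 + C (d : ℚ) * X + C ((d : ℚ) ^ 2 / 2) * X ^ 2
          + C ((d : ℚ) * ((d : ℚ) - 1) * ((d : ℚ) + 1) / 6) * X ^ 3
          + C ((d : ℚ) * ((d : ℚ) - 1) * ((d : ℚ) ^ 2 + (d : ℚ) - 3) / 24) * X ^ 4
          + C ((d : ℚ) * ((d : ℚ) - 1) * ((d : ℚ) - 2) * ((d : ℚ) ^ 2 + 3 * (d : ℚ) - 3) / 120)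
            * X ^ 5).coeff k
      = ((1 + X + C (1 / 2 : ℚ) * X ^ 2) ^ d).coeff k) := by
  exact ⟨fun _ hk ↦ coeff_eH_mul_starCorrection d hk,
    fun _ hk ↦ coeff_starPredegree_eq_coeff_pow d hk⟩
end

section
/- Let m ∈ ℚ and let r₁, …, r_s ∈ ℚ be a finite family with elementary symmetric functions e₁, …, e₅ (where e_j = 0 if j > s). For r ∈ ℚ set F(r) := 1 − r(2 − 3r + r² − 12m + 3rm + 6m²)H⁶/6! + 3r(−12 + 2r − 2r² + r³ + 10m − 8rm + 3r²m − 20m² + 6rm² + 10m³)H⁷/7! − 3r(−64 + 2r² − 3r³ + 2r⁴ + 10rm − 12r²m + 6r³m + 30m² − 30rm² + 12r²m² − 60m³ + 20rm³ + 30m⁴)H⁸/8!. Then ( 1 − m²(m−1)(m−2)(m² + 3m − 3)( H⁶/720 − mH⁷/840 + m²H⁸/1920 ) )·∏ᵢ F(rᵢ) ≡ 1 + c₆H⁶/6! + c₇H⁷/7! + c₈H⁸/8! (mod H⁹), where c₆ = −2e₁ + 3e₁² − e₁³ − 6e₂ + 3e₁e₂ − 3e₃ + 12e₁m − 3e₁²m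 + 6e₂m + 6m² − 6e₁m² − 15m³ + 10m⁴ − m⁶; c₇ = −36e₁ + 6e₁² − 6e₁³ + 3e₁⁴ − 12e₂ + 18e₁e₂ − 12e₁²e₂ + 6e₂² − 18e₃ + 12e₁e₃ − 12e₄ + 30e₁m − 24e₁²m + 9e₁³m + 48e₂m − 27e₁e₂m + 27e₃m − 60e₁m² + 18e₁²m² − 36e₂m² − 36m³ + 30e₁m³ + 90m⁴ − 60m⁵ + 6m⁷; c₈ = 192e₁ − 6e₁³ + 9e₁⁴ − 6e₁⁵ + 18e₁e₂ − 36e₁²e₂ + 30e₁³e₂ + 18e₂² − 30e₁e₂² − 18e₃ + 36e₁e₃ − 30e₁²e₃ + 30e₂e₃ − 36e₄ + 30e₁e₄ − 30e₅ − 30e₁²m + 36e₁³m − 18e₁⁴m + 60e₂m − 108e₁e₂m + 72e₁²e₂m − 36e₂²m + 108e₃m − 72e₁e₃m + 72e₄m − 90e₁m² + 90e₁²m² − 36e₁³m² − 180e₂m² + 108e₁e₂m² − 108e₃m² + 180e₁m³ − 60e₁²m³ + 120e₂m³ + 126m⁴ − 90e₁m⁴ − 315m⁵ + 210m⁶ −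 21m⁸. (This is the reformulation, in elementary symmetric functions, of the multiplicative contribution of an ordinary multiple point given after Proposition 4.1 of the paper.) -/
open Polynomial

/-- The multiplicative factor `F(r)` of Proposition 4.1, for a branch whose tangent line
meets the curve with multiplicity `r` at an ordinary multiple point of multiplicity `m`. -/
noncomputable def Ffactor (m r : ℚ) : Polynomial ℚ :=
  1 - C (r * (2 - 3 * r + r ^ 2 - 12 * m + 3 * r * m + 6 * m ^ 2) / 720) * X ^ 6
    + C (3 * r * (-12 + 2 * r - 2 * r ^ 2 + r ^ 3 + 10 * m - 8 * r * m + 3 * r ^ 2 * m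
        - 20 * m ^ 2 + 6 * r * m ^ 2 + 10 * m ^ 3) / 5040) * X ^ 7
    - C (3 * r * (-64 + 2 * r ^ 2 - 3 * r ^ 3 + 2 * r ^ 4 + 10 * r * m - 12 * r ^ 2 * m
        + 6 * r ^ 3 * m + 30 * m ^ 2 - 30 * r * m ^ 2 + 12 * r ^ 2 * m ^ 2 - 60 * m ^ 3
        + 20 * r * m ^ 3 + 30 * m ^ 4) / 40320) * X ^ 8

/-!
Every factor has the form `1 + H⁶ * G`, so modulo `H¹²` multiplying the factors only adds the tails
`G`. The tail of `F(r)` is a polynomial in `r` of degree at most `5`; summed over the branches it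
becomes a linear combination of the power sums `p₁, …, p₅` of the `rᵢ`, and Newton's identities turn
these into polynomials in `e₁, …, e₅`.
-/

section SumOfTails

theorem exists_prod_one_add_mul_eq {R : Type*} [CommSemiring R] (t : R) (s : Multiset R) :
    ∃ q, (s.map fun a ↦ 1 + t * a).prod = 1 + t * s.sum + t ^ 2 * q := by
  induction s using Multiset.induction with
  | empty => exact ⟨0, by simp⟩
  | cons a s ih =>
    obtain ⟨q, hq⟩ := ih
    refine ⟨a * s.sum + (1 + t * a) * q, ?_⟩
    rw [Multiset.map_cons, Multiset.prod_cons, Multiset.sum_cons, hq]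
    ring

theorem coeff_prod_one_add_X_pow_mul {R : Type*} [CommSemiring R] {n k : ℕ} (hk : k < 2 * n)
    (s : Multiset R[X]) :
    (s.map fun p ↦ 1 + X ^ n * p).prod.coeff k = (1 + X ^ n * s.sum).coeff k := by
  obtain ⟨q, hq⟩ := exists_prod_one_add_mul_eq (X ^ n) s
  rw [hq, coeff_add, ← pow_mul, coeff_X_pow_mul', if_neg (by lia), add_zero]

end SumOfTails

section PowerSums

/-- The power sum `∑ aᵏ` over the elements `a` of a multiset, with multiplicity: the evaluated form
of `MvPolynomial.psum`, as `Multiset.esymm` is of `MvPolynomial.esymm`. -/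
def powerSum {R : Type*} [CommSemiring R] (s : Multiset R) (k : ℕ) : R :=
  (s.map (· ^ k)).sum

theorem aeval_psum_eq_powerSum {σ A R : Type*} [Fintype σ] [CommSemiring A] [CommSemiring R]
    [Algebra A R] (f : σ → R) (k : ℕ) :
    MvPolynomial.aeval f (MvPolynomial.psum σ A k) = powerSum (Finset.univ.val.map f) k := by
  simp only [MvPolynomial.psum, map_sum, map_pow, MvPolynomial.aeval_X, powerSum,
    Multiset.map_map]
  rfl

variable {R : Type*} [CommRing R]

theorem powerSum_eq_mul_esymm_sub_sum (s : Multiset R) {k : ℕ} (hk : 0 < k) :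
    powerSum s k = (-1) ^ (k + 1) * k * s.esymm k -
      ∑ a ∈ Finset.HasAntidiagonal.antidiagonal k with a.1 ∈ Set.Ioo 0 k,
        (-1) ^ a.1 * s.esymm a.1 * powerSum s a.2 := by
  classical
  have newton := congrArg (MvPolynomial.aeval fun x : s ↦ (x : R))
    (MvPolynomial.psum_eq_mul_esymm_sub_sum s ℤ k hk)
  simpa only [map_sub, map_mul, map_pow, map_neg, map_one, map_natCast, map_sum,
    aeval_psum_eq_powerSum, MvPolynomial.aeval_esymm_eq_multiset_esymm, Multiset.map_univ_coe]
    using newton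

theorem powerSum_succ (s : Multiset R) (k : ℕ) :
    powerSum s (k + 1) = (-1) ^ k * (k + 1) * s.esymm (k + 1) +
      ∑ i ∈ Finset.range k, (-1) ^ i * s.esymm (i + 1) * powerSum s (k - i) := by
  have inner_sum :
      ∑ a ∈ Finset.HasAntidiagonal.antidiagonal (k + 1) with a.1 ∈ Set.Ioo 0 (k + 1),
        (-1) ^ a.1 * s.esymm a.1 * powerSum s a.2 =
      ∑ i ∈ Finset.range k, (-1) ^ (i + 1) * s.esymm (i + 1) * powerSum s (k - i) := by
    rw [Finset.sum_filter, Finset.Nat.sum_antidiagonal_eq_sum_range_succ_mk,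
      Finset.sum_range_succ, Finset.sum_range_succ', if_neg (by simp), if_neg (by simp),
      add_zero, add_zero]
    refine Finset.sum_congr rfl fun i hi ↦ ?_
    rw [if_pos ⟨i.succ_pos, by simpa using hi⟩, Nat.add_sub_add_right]
  rw [powerSum_eq_mul_esymm_sub_sum s k.succ_pos, inner_sum, sub_eq_add_neg,
    ← Finset.sum_neg_distrib]
  push_cast
  simp only [pow_succ, mul_neg, neg_mul, mul_one, neg_neg]

theorem powerSum_one (s : Multiset R) : powerSum s 1 = s.esymm 1 := by
  simp [powerSum_succ s 0]

theorem powerSum_two (s : Multiset R) : powerSum s 2 = s.esymm 1 ^ 2 - 2 * s.esymm 2 := by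
  simp only [powerSum_succ s 1, Finset.sum_range_succ, Finset.sum_range_zero, Nat.sub_zero,
    zero_add, powerSum_one]
  push_cast
  ring

theorem powerSum_three (s : Multiset R) :
    powerSum s 3 = s.esymm 1 ^ 3 - 3 * s.esymm 1 * s.esymm 2 + 3 * s.esymm 3 := by
  simp only [powerSum_succ s 2, Finset.sum_range_succ, Finset.sum_range_zero, Nat.reduceSub,
    Nat.reduceAdd, powerSum_one, powerSum_two]
  push_cast
  ring

theorem powerSum_four (s : Multiset R) :
    powerSum s 4 = s.esymm 1 ^ 4 - 4 * s.esymm 1 ^ 2 * s.esymm 2 + 2 * s.esymm 2 ^ 2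
      + 4 * s.esymm 1 * s.esymm 3 - 4 * s.esymm 4 := by
  simp only [powerSum_succ s 3, Finset.sum_range_succ, Finset.sum_range_zero, Nat.reduceSub,
    Nat.reduceAdd, powerSum_one, powerSum_two, powerSum_three]
  push_cast
  ring

theorem powerSum_five (s : Multiset R) :
    powerSum s 5 = s.esymm 1 ^ 5 - 5 * s.esymm 1 ^ 3 * s.esymm 2 + 5 * s.esymm 1 * s.esymm 2 ^ 2
      + 5 * s.esymm 1 ^ 2 * s.esymm 3 - 5 * s.esymm 2 * s.esymm 3 - 5 * s.esymm 1 * s.esymm 4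
      + 5 * s.esymm 5 := by
  simp only [powerSum_succ s 4, Finset.sum_range_succ, Finset.sum_range_zero, Nat.reduceSub,
    Nat.reduceAdd, powerSum_one, powerSum_two, powerSum_three, powerSum_four]
  push_cast
  ring

end PowerSums

section Coefficients

variable {R : Type*} [CommRing R]

/-- The coefficient of `H⁶/6!` in `F(r)`. -/
def branchCoeff6 (m r : R) : R :=
  -(r * (2 - 3 * r + r ^ 2 - 12 * m + 3 * r * m + 6 * m ^ 2))

/-- The coefficient of `H⁷/7!` in `F(r)`. -/
def branchCoeff7 (m r : R) : R :=
  3 * r * (-12 + 2 * r - 2 * r ^ 2 + r ^ 3 + 10 * m - 8 * r * m + 3 * r ^ 2 * m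
    - 20 * m ^ 2 + 6 * r * m ^ 2 + 10 * m ^ 3)

/-- The coefficient of `H⁸/8!` in `F(r)`. -/
def branchCoeff8 (m r : R) : R :=
  -(3 * r * (-64 + 2 * r ^ 2 - 3 * r ^ 3 + 2 * r ^ 4 + 10 * r * m - 12 * r ^ 2 * m
    + 6 * r ^ 3 * m + 30 * m ^ 2 - 30 * r * m ^ 2 + 12 * r ^ 2 * m ^ 2 - 60 * m ^ 3
    + 20 * r * m ^ 3 + 30 * m ^ 4))

/-- Minus the coefficient of `H⁶/6!` in the factor that depends only on the multiplicity `m`; its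
coefficients of `H⁷/7!` and `H⁸/8!` are `6 * m` and `-21 * m ^ 2` times this quantity. -/
def multiplicityCoeff (m : R) : R :=
  m ^ 2 * (m - 1) * (m - 2) * (m ^ 2 + 3 * m - 3)

/-- The coefficient `c₆` of `H⁶/6!` in the contribution of a multiple point. -/
def pointCoeff6 (m e1 e2 e3 : R) : R :=
  -2 * e1 + 3 * e1 ^ 2 - e1 ^ 3 - 6 * e2 + 3 * e1 * e2 - 3 * e3 + 12 * e1 * m
    - 3 * e1 ^ 2 * m + 6 * e2 * m + 6 * m ^ 2 - 6 * e1 * m ^ 2 - 15 * m ^ 3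
    + 10 * m ^ 4 - m ^ 6

/-- The coefficient `c₇` of `H⁷/7!` in the contribution of a multiple point. -/
def pointCoeff7 (m e1 e2 e3 e4 : R) : R :=
  -36 * e1 + 6 * e1 ^ 2 - 6 * e1 ^ 3 + 3 * e1 ^ 4 - 12 * e2 + 18 * e1 * e2
    - 12 * e1 ^ 2 * e2 + 6 * e2 ^ 2 - 18 * e3 + 12 * e1 * e3 - 12 * e4 + 30 * e1 * m
    - 24 * e1 ^ 2 * m + 9 * e1 ^ 3 * m + 48 * e2 * m - 27 * e1 * e2 * m + 27 * e3 * m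
    - 60 * e1 * m ^ 2 + 18 * e1 ^ 2 * m ^ 2 - 36 * e2 * m ^ 2 - 36 * m ^ 3
    + 30 * e1 * m ^ 3 + 90 * m ^ 4 - 60 * m ^ 5 + 6 * m ^ 7

/-- The coefficient `c₈` of `H⁸/8!` in the contribution of a multiple point. -/
def pointCoeff8 (m e1 e2 e3 e4 e5 : R) : R :=
  192 * e1 - 6 * e1 ^ 3 + 9 * e1 ^ 4 - 6 * e1 ^ 5 + 18 * e1 * e2
    - 36 * e1 ^ 2 * e2 + 30 * e1 ^ 3 * e2 + 18 * e2 ^ 2 - 30 * e1 * e2 ^ 2 - 18 * e3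
    + 36 * e1 * e3 - 30 * e1 ^ 2 * e3 + 30 * e2 * e3 - 36 * e4 + 30 * e1 * e4
    - 30 * e5 - 30 * e1 ^ 2 * m + 36 * e1 ^ 3 * m - 18 * e1 ^ 4 * m + 60 * e2 * m
    - 108 * e1 * e2 * m + 72 * e1 ^ 2 * e2 * m - 36 * e2 ^ 2 * m + 108 * e3 * m
    - 72 * e1 * e3 * m + 72 * e4 * m - 90 * e1 * m ^ 2 + 90 * e1 ^ 2 * m ^ 2
    - 36 * e1 ^ 3 * m ^ 2 - 180 * e2 * m ^ 2 + 108 * e1 * e2 * m ^ 2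
    - 108 * e3 * m ^ 2 + 180 * e1 * m ^ 3 - 60 * e1 ^ 2 * m ^ 3 + 120 * e2 * m ^ 3
    + 126 * m ^ 4 - 90 * e1 * m ^ 4 - 315 * m ^ 5 + 210 * m ^ 6
    - 21 * m ^ 8

theorem sum_map_branchCoeff6 (m : R) (s : Multiset R) :
    (s.map (branchCoeff6 m)).sum =
      -(2 - 12 * m + 6 * m ^ 2) * powerSum s 1 + (3 - 3 * m) * powerSum s 2 - powerSum s 3 := by
  have expand (r : R) : branchCoeff6 m r =
      -(2 - 12 * m + 6 * m ^ 2) * r ^ 1 + (3 - 3 * m) * r ^ 2 - r ^ 3 := by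
    rw [branchCoeff6]
    ring
  simp only [expand, Multiset.sum_map_add, Multiset.sum_map_sub, Multiset.sum_map_mul_left,
    powerSum]

theorem sum_map_branchCoeff7 (m : R) (s : Multiset R) :
    (s.map (branchCoeff7 m)).sum =
      3 * (-12 + 10 * m - 20 * m ^ 2 + 10 * m ^ 3) * powerSum s 1
        + 3 * (2 - 8 * m + 6 * m ^ 2) * powerSum s 2 + 3 * (-2 + 3 * m) * powerSum s 3
        + 3 * powerSum s 4 := by
  have expand (r : R) : branchCoeff7 m r =
      3 * (-12 + 10 * m - 20 * m ^ 2 + 10 * m ^ 3) * r ^ 1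
        + 3 * (2 - 8 * m + 6 * m ^ 2) * r ^ 2 + 3 * (-2 + 3 * m) * r ^ 3 + 3 * r ^ 4 := by
    rw [branchCoeff7]
    ring
  simp only [expand, Multiset.sum_map_add, Multiset.sum_map_mul_left, powerSum]

theorem sum_map_branchCoeff8 (m : R) (s : Multiset R) :
    (s.map (branchCoeff8 m)).sum =
      -3 * (-64 + 30 * m ^ 2 - 60 * m ^ 3 + 30 * m ^ 4) * powerSum s 1
        - 3 * (10 * m - 30 * m ^ 2 + 20 * m ^ 3) * powerSum s 2
        - 3 * (2 - 12 * m + 12 * m ^ 2) * powerSum s 3 - 3 * (-3 + 6 * m) * powerSum s 4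
        - 6 * powerSum s 5 := by
  have expand (r : R) : branchCoeff8 m r =
      -3 * (-64 + 30 * m ^ 2 - 60 * m ^ 3 + 30 * m ^ 4) * r ^ 1
        - 3 * (10 * m - 30 * m ^ 2 + 20 * m ^ 3) * r ^ 2
        - 3 * (2 - 12 * m + 12 * m ^ 2) * r ^ 3 - 3 * (-3 + 6 * m) * r ^ 4 - 6 * r ^ 5 := by
    rw [branchCoeff8]
    ring
  simp only [expand, Multiset.sum_map_sub, Multiset.sum_map_mul_left, powerSum]

theorem neg_multiplicityCoeff_add_sum_branchCoeff6 (m : R) (s : Multiset R) :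
    -multiplicityCoeff m + (s.map (branchCoeff6 m)).sum =
      pointCoeff6 m (s.esymm 1) (s.esymm 2) (s.esymm 3) := by
  rw [sum_map_branchCoeff6, powerSum_one, powerSum_two, powerSum_three, multiplicityCoeff,
    pointCoeff6]
  ring

theorem multiplicityCoeff_add_sum_branchCoeff7 (m : R) (s : Multiset R) :
    6 * m * multiplicityCoeff m + (s.map (branchCoeff7 m)).sum =
      pointCoeff7 m (s.esymm 1) (s.esymm 2) (s.esymm 3) (s.esymm 4) := by
  rw [sum_map_branchCoeff7, powerSum_one, powerSum_two, powerSum_three, powerSum_four,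
    multiplicityCoeff, pointCoeff7]
  ring

theorem neg_multiplicityCoeff_add_sum_branchCoeff8 (m : R) (s : Multiset R) :
    -21 * m ^ 2 * multiplicityCoeff m + (s.map (branchCoeff8 m)).sum =
      pointCoeff8 m (s.esymm 1) (s.esymm 2) (s.esymm 3) (s.esymm 4) (s.esymm 5) := by
  rw [sum_map_branchCoeff8, powerSum_one, powerSum_two, powerSum_three, powerSum_four,
    powerSum_five, multiplicityCoeff, pointCoeff8]
  ring

end Coefficients

section Factors

variable {K : Type*} [Field K]

/-- The tail `(a * H⁶/6! + b * H⁷/7! + c * H⁸/8!) / H⁶` of a factor `1 + H⁶ * G`. -/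
noncomputable def factorTail (a b c : K) : K[X] :=
  C (a / 720) + C (b / 5040) * X + C (c / 40320) * X ^ 2

theorem one_add_X_pow_six_mul_factorTail (a b c : K) :
    1 + X ^ 6 * factorTail a b c =
      1 + C (a / 720) * X ^ 6 + C (b / 5040) * X ^ 7 + C (c / 40320) * X ^ 8 := by
  rw [factorTail]
  ring

theorem factorTail_add (a b c a' b' c' : K) :
    factorTail a b c + factorTail a' b' c' = factorTail (a + a') (b + b') (c + c') := by
  simp only [factorTail, add_div, C_add]
  ring

theorem sum_map_factorTail {ι : Type*} (s : Multiset ι) (a b c : ι → K) :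
    (s.map fun i ↦ factorTail (a i) (b i) (c i)).sum =
      factorTail (s.map a).sum (s.map b).sum (s.map c).sum := by
  induction s using Multiset.induction with
  | empty => simp [factorTail]
  | cons i s ih => simp only [Multiset.map_cons, Multiset.sum_cons, ih, factorTail_add]

/-- The tail of the factor that depends only on the multiplicity `m`. -/
noncomputable def multiplicityTail (m : K) : K[X] :=
  factorTail (-multiplicityCoeff m) (6 * m * multiplicityCoeff m)
    (-21 * m ^ 2 * multiplicityCoeff m)

/-- The tail of the branch factor `F(r)`. -/
noncomputable def branchTail (m r : K) : K[X] :=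
  factorTail (branchCoeff6 m r) (branchCoeff7 m r) (branchCoeff8 m r)

theorem one_sub_C_multiplicityCoeff_mul_eq [CharZero K] (m : K) :
    1 - C (multiplicityCoeff m) *
        (C (1 / 720) * X ^ 6 - C (m / 840) * X ^ 7 + C (m ^ 2 / 1920) * X ^ 8) =
      1 + X ^ 6 * multiplicityTail m := by
  have h6 : -multiplicityCoeff m / 720 = -(multiplicityCoeff m * (1 / 720)) := by ring
  have h7 : 6 * m * multiplicityCoeff m / 5040 = multiplicityCoeff m * (m / 840) := by ring
  have h8 : -21 * m ^ 2 * multiplicityCoeff m / 40320 =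
      -(multiplicityCoeff m * (m ^ 2 / 1920)) := by ring
  rw [multiplicityTail, one_add_X_pow_six_mul_factorTail, h6, h7, h8]
  simp only [C_neg, C_mul]
  ring

theorem Ffactor_eq (m r : ℚ) : Ffactor m r = 1 + X ^ 6 * branchTail m r := by
  rw [branchTail, one_add_X_pow_six_mul_factorTail, branchCoeff6, branchCoeff7, branchCoeff8,
    Ffactor]
  simp only [neg_div, C_neg]
  ring

theorem multiplicityTail_add_sum_branchTail (m : K) (s : Multiset K) :
    multiplicityTail m + (s.map (branchTail m)).sum =
      factorTail (pointCoeff6 m (s.esymm 1) (s.esymm 2) (s.esymm 3))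
        (pointCoeff7 m (s.esymm 1) (s.esymm 2) (s.esymm 3) (s.esymm 4))
        (pointCoeff8 m (s.esymm 1) (s.esymm 2) (s.esymm 3) (s.esymm 4) (s.esymm 5)) := by
  rw [funext (branchTail.eq_1 m), multiplicityTail, sum_map_factorTail, factorTail_add,
    neg_multiplicityCoeff_add_sum_branchCoeff6, multiplicityCoeff_add_sum_branchCoeff7,
    neg_multiplicityCoeff_add_sum_branchCoeff8]

theorem stmt_8_general [CharZero K] (m : K) (r : Multiset K) {k : ℕ} (hk : k < 12) :
    ((1 - C (multiplicityCoeff m) *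
        (C (1 / 720) * X ^ 6 - C (m / 840) * X ^ 7 + C (m ^ 2 / 1920) * X ^ 8)) *
      (r.map fun a ↦ 1 + X ^ 6 * branchTail m a).prod).coeff k =
    (1 + C (pointCoeff6 m (r.esymm 1) (r.esymm 2) (r.esymm 3) / 720) * X ^ 6
      + C (pointCoeff7 m (r.esymm 1) (r.esymm 2) (r.esymm 3) (r.esymm 4) / 5040) * X ^ 7
      + C (pointCoeff8 m (r.esymm 1) (r.esymm 2) (r.esymm 3) (r.esymm 4) (r.esymm 5) / 40320)
        * X ^ 8).coeff k := by
  have tails := coeff_prod_one_add_X_pow_mul (n := 6) hk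
    (multiplicityTail m ::ₘ r.map (branchTail m))
  rwa [Multiset.map_cons, Multiset.prod_cons, Multiset.map_map, Multiset.sum_cons,
    multiplicityTail_add_sum_branchTail, one_add_X_pow_six_mul_factorTail,
    ← one_sub_C_multiplicityCoeff_mul_eq] at tails

end Factors

/-- The multiplicative contribution of an ordinary multiple point, rewritten in the
elementary symmetric functions `e₁,…,e₅` of the intersection multiplicities `rᵢ`
(formula following Proposition 4.1). -/
theorem stmt_8 (m : ℚ) (r : Multiset ℚ)
    (e1 e2 e3 e4 e5 : ℚ)
    (he1 : e1 = r.esymm 1) (he2 : e2 = r.esymm 2) (he3 : e3 = r.esymm 3)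
    (he4 : e4 = r.esymm 4) (he5 : e5 = r.esymm 5) :
    ∀ k ≤ 8,
      (((1 : Polynomial ℚ) - C (m ^ 2 * (m - 1) * (m - 2) * (m ^ 2 + 3 * m - 3)) *
          (C (1 / 720 : ℚ) * X ^ 6 - C (m / 840) * X ^ 7 + C (m ^ 2 / 1920) * X ^ 8)) *
        (r.map (Ffactor m)).prod).coeff k
      = (1 + C ((-2 * e1 + 3 * e1 ^ 2 - e1 ^ 3 - 6 * e2 + 3 * e1 * e2 - 3 * e3 + 12 * e1 * m
            - 3 * e1 ^ 2 * m + 6 * e2 * m + 6 * m ^ 2 - 6 * e1 * m ^ 2 - 15 * m ^ 3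
            + 10 * m ^ 4 - m ^ 6) / 720) * X ^ 6
          + C ((-36 * e1 + 6 * e1 ^ 2 - 6 * e1 ^ 3 + 3 * e1 ^ 4 - 12 * e2 + 18 * e1 * e2
            - 12 * e1 ^ 2 * e2 + 6 * e2 ^ 2 - 18 * e3 + 12 * e1 * e3 - 12 * e4 + 30 * e1 * m
            - 24 * e1 ^ 2 * m + 9 * e1 ^ 3 * m + 48 * e2 * m - 27 * e1 * e2 * m + 27 * e3 * m
            - 60 * e1 * m ^ 2 + 18 * e1 ^ 2 * m ^ 2 - 36 * e2 * m ^ 2 - 36 * m ^ 3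
            + 30 * e1 * m ^ 3 + 90 * m ^ 4 - 60 * m ^ 5 + 6 * m ^ 7) / 5040) * X ^ 7
          + C ((192 * e1 - 6 * e1 ^ 3 + 9 * e1 ^ 4 - 6 * e1 ^ 5 + 18 * e1 * e2
            - 36 * e1 ^ 2 * e2 + 30 * e1 ^ 3 * e2 + 18 * e2 ^ 2 - 30 * e1 * e2 ^ 2 - 18 * e3
            + 36 * e1 * e3 - 30 * e1 ^ 2 * e3 + 30 * e2 * e3 - 36 * e4 + 30 * e1 * e4
            - 30 * e5 - 30 * e1 ^ 2 * m + 36 * e1 ^ 3 * m - 18 * e1 ^ 4 * m + 60 * e2 * m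
            - 108 * e1 * e2 * m + 72 * e1 ^ 2 * e2 * m - 36 * e2 ^ 2 * m + 108 * e3 * m
            - 72 * e1 * e3 * m + 72 * e4 * m - 90 * e1 * m ^ 2 + 90 * e1 ^ 2 * m ^ 2
            - 36 * e1 ^ 3 * m ^ 2 - 180 * e2 * m ^ 2 + 108 * e1 * e2 * m ^ 2
            - 108 * e3 * m ^ 2 + 180 * e1 * m ^ 3 - 60 * e1 ^ 2 * m ^ 3 + 120 * e2 * m ^ 3
            + 126 * m ^ 4 - 90 * e1 * m ^ 4 - 315 * m ^ 5 + 210 * m ^ 6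
            - 21 * m ^ 8) / 40320) * X ^ 8).coeff k := by
  subst he1 he2 he3 he4 he5
  rw [funext (Ffactor_eq m)]
  exact fun k hk ↦ stmt_8_general m r (by lia)
end

section
/- Let F := 1 − H⁶/48 + 3H⁷/70 − 197H⁸/4480 and N := 1 − H⁶/6 + 101H⁷/280 − 25H⁸/64. For all natural numbers d, n with d ≥ 2 and 6n ≤ 3d(d−2), one has 8!·(the coefficient of H⁸ in e(dH)·( 1 − 2d( H⁵/20 − (5d+18)H⁶/360 + (9d+8)H⁷/420 − dH⁸/60 ) )·F^{3d(d−2)−6n}·Nⁿ, computed in ℚ[H] modulo H⁹) = d⁸ − 1372d⁴ + 7992d³ − 15879d² + 10638d − 24n(35d² − 174d + 213). (This is the predegree computed in Example 4.1 of the paper for a degree-d curve with n ordinary nodes of the stated type and otherwise only ordinary flexes.) -/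
open Polynomial

/-- The multiplicative contribution of one ordinary flex. -/
noncomputable def Fflex : Polynomial ℚ :=
  1 - C (1 / 48 : ℚ) * X ^ 6 + C (3 / 70 : ℚ) * X ^ 7 - C (197 / 4480 : ℚ) * X ^ 8

/-- The multiplicative contribution of an ordinary node whose two branches each meet their
tangent lines with multiplicity exactly 2. -/
noncomputable def Nnode : Polynomial ℚ :=
  1 - C (1 / 6 : ℚ) * X ^ 6 + C (101 / 280 : ℚ) * X ^ 7 - C (25 / 64 : ℚ) * X ^ 8

/-!
Every factor other than `e(dH)` is `1 + O(H⁵)`, and those of the flexes and nodes are `1 + O(H⁶)`.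
A product of two of these deviations from `1` is therefore `O(H¹¹)` and invisible modulo `H⁹`, so
the deviations simply add up: the coefficient of `H⁸` is a contribution of the degree alone plus
one contribution for each flex and each node.
-/

section Linearization

variable {R : Type*} [CommRing R] {a b u v w : R}

theorem mul_dvd_mul_sub_add_sub_one (hu : a ∣ u - 1) (hv : b ∣ v - 1) :
    a * b ∣ u * v - (u + (v - 1)) := by
  convert mul_dvd_mul hu hv using 1
  ring

theorem sq_dvd_pow_sub_one_add_mul (hu : a ∣ u - 1) (n : ℕ) :
    a ^ 2 ∣ u ^ n - (1 + n * (u - 1)) := by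
  convert (pow_dvd_pow_of_dvd hu 2).trans (sq_dvd_add_pow_sub_sub (u - 1) 1 n) using 1
  simp only [add_sub_cancel, one_pow]
  ring

theorem sq_dvd_pow_mul_pow_sub_one_add (hv : b ∣ v - 1) (hw : b ∣ w - 1) (m n : ℕ) :
    b ^ 2 ∣ v ^ m * w ^ n - (1 + (m * (v - 1) + n * (w - 1))) := by
  have hvm : b ∣ v ^ m - 1 := hv.trans (sub_one_dvd_pow_sub_one v m)
  have hwn : b ∣ w ^ n - 1 := hw.trans (sub_one_dvd_pow_sub_one w n)
  have hmul : b ^ 2 ∣ v ^ m * w ^ n - (v ^ m + (w ^ n - 1)) :=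
    sq b ▸ mul_dvd_mul_sub_add_sub_one hvm hwn
  convert (hmul.add (sq_dvd_pow_sub_one_add_mul hv m)).add (sq_dvd_pow_sub_one_add_mul hw n)
    using 1
  ring

theorem mul_dvd_mul_pow_mul_pow_sub_add (hab : a ∣ b) (hu : a ∣ u - 1) (hv : b ∣ v - 1)
    (hw : b ∣ w - 1) (m n : ℕ) :
    a * b ∣ u * v ^ m * w ^ n - (u + (m * (v - 1) + n * (w - 1))) := by
  set s := m * (v - 1) + n * (w - 1)
  have hpow : a * b ∣ v ^ m * w ^ n - (1 + s) :=
    (sq b ▸ mul_dvd_mul_right hab b).trans (sq_dvd_pow_mul_pow_sub_one_add hv hw m n)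
  have hbs : b ∣ 1 + s - 1 := by
    rw [add_sub_cancel_left]
    exact (hv.mul_left _).add (hw.mul_left _)
  convert (hpow.mul_left u).add (mul_dvd_mul_sub_add_sub_one hu hbs) using 1
  ring

end Linearization

theorem coeff_mul_eq_of_X_pow_dvd_sub {R : Type*} [CommRing R] {p q : R[X]} {k n : ℕ}
    (h : X ^ n ∣ p - q) (hk : k < n) (f : R[X]) : (f * p).coeff k = (f * q).coeff k := by
  have hf : X ^ n ∣ f * p - f * q := by
    rw [← mul_sub]
    exact h.mul_left f
  rw [← sub_eq_zero, ← coeff_sub]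
  exact X_pow_dvd_iff.mp hf k hk

/-- The factor of the predegree polynomial of a curve that depends only on its degree `d`, to be
multiplied by `e(dH)` and by one factor for each flex and node. -/
noncomputable def degreeFactor (d : ℚ) : ℚ[X] :=
  1 - C (2 * d) * (C (1 / 20 : ℚ) * X ^ 5 - C ((5 * d + 18) / 360) * X ^ 6
    + C ((9 * d + 8) / 420) * X ^ 7 - C (d / 60) * X ^ 8)

theorem X_pow_five_dvd_degreeFactor_sub_one (d : ℚ) : X ^ 5 ∣ degreeFactor d - 1 :=
  ⟨-C (2 * d) * (C (1 / 20) - C ((5 * d + 18) / 360) * X + C ((9 * d + 8) / 420) * X ^ 2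
    - C (d / 60) * X ^ 3), by rw [degreeFactor]; ring⟩

theorem X_pow_six_dvd_Fflex_sub_one : X ^ 6 ∣ Fflex - 1 :=
  ⟨-C (1 / 48) + C (3 / 70) * X - C (197 / 4480) * X ^ 2, by rw [Fflex]; ring⟩

theorem X_pow_six_dvd_Nnode_sub_one : X ^ 6 ∣ Nnode - 1 :=
  ⟨-C (1 / 6) + C (101 / 280) * X - C (25 / 64) * X ^ 2, by rw [Nnode]; ring⟩

theorem coeff_eH_s10 (d : ℚ) {i : ℕ} (hi : i < 9) : (eH d).coeff i = d ^ i / i.factorial := by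
  simp [eH, hi]

theorem coeff_eH_mul (d : ℚ) (f : ℚ[X]) {k : ℕ} (hk : k < 9) :
    (eH d * f).coeff k
      = ∑ i ∈ Finset.range (k + 1), f.coeff i * (d ^ (k - i) / (k - i).factorial) := by
  rw [mul_comm, coeff_mul, Finset.Nat.sum_antidiagonal_eq_sum_range_succ_mk]
  exact Finset.sum_congr rfl fun i _ ↦ by rw [coeff_eH_s10 d (by lia)]

theorem factorial_mul_coeff_eH_mul_degreeFactor (d : ℚ) :
    (Nat.factorial 8 : ℚ) * (eH d * degreeFactor d).coeff 8
      = d ^ 8 - 112 * d ^ 4 + 288 * d ^ 3 - 192 * d ^ 2 := by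
  rw [coeff_eH_mul d _ (by norm_num)]
  simp only [degreeFactor, Finset.sum_range_succ, Finset.sum_range_zero, coeff_sub, coeff_add,
    coeff_one, coeff_C_mul, coeff_X_pow]
  norm_num [Nat.factorial]
  ring

theorem factorial_mul_coeff_eH_mul_Fflex_sub_one (d : ℚ) :
    (Nat.factorial 8 : ℚ) * (eH d * (Fflex - 1)).coeff 8 = -420 * d ^ 2 + 1728 * d - 1773 := by
  rw [coeff_eH_mul d _ (by norm_num)]
  simp only [Fflex, Finset.sum_range_succ, Finset.sum_range_zero, coeff_sub, coeff_add, coeff_one,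
    coeff_C_mul, coeff_X_pow]
  norm_num [Nat.factorial]
  ring

theorem factorial_mul_coeff_eH_mul_Nnode_sub_one (d : ℚ) :
    (Nat.factorial 8 : ℚ) * (eH d * (Nnode - 1)).coeff 8
      = -3360 * d ^ 2 + 14544 * d - 15750 := by
  rw [coeff_eH_mul d _ (by norm_num)]
  simp only [Nnode, Finset.sum_range_succ, Finset.sum_range_zero, coeff_sub, coeff_add, coeff_one,
    coeff_C_mul, coeff_X_pow]
  norm_num [Nat.factorial]
  ring

theorem stmt_10_general (d : ℚ) (m n : ℕ) :
    (Nat.factorial 8 : ℚ) * (eH d * degreeFactor d * Fflex ^ m * Nnode ^ n).coeff 8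
      = (d ^ 8 - 112 * d ^ 4 + 288 * d ^ 3 - 192 * d ^ 2)
        + m * (-420 * d ^ 2 + 1728 * d - 1773) + n * (-3360 * d ^ 2 + 14544 * d - 15750) := by
  have hlin : X ^ 9 ∣ degreeFactor d * Fflex ^ m * Nnode ^ n
      - (degreeFactor d + ((m : ℚ[X]) * (Fflex - 1) + (n : ℚ[X]) * (Nnode - 1))) :=
    (pow_dvd_pow X (by norm_num : 9 ≤ 5 + 6)).trans <| pow_add (X : ℚ[X]) 5 6 ▸
      mul_dvd_mul_pow_mul_pow_sub_add (pow_dvd_pow X (by norm_num))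
        (X_pow_five_dvd_degreeFactor_sub_one d) X_pow_six_dvd_Fflex_sub_one
        X_pow_six_dvd_Nnode_sub_one m n
  have hcoeff : (eH d * degreeFactor d * Fflex ^ m * Nnode ^ n).coeff 8
      = (eH d * degreeFactor d).coeff 8 + (m * (eH d * (Fflex - 1)).coeff 8
        + n * (eH d * (Nnode - 1)).coeff 8) := by
    rw [mul_assoc (eH d), mul_assoc (eH d), coeff_mul_eq_of_X_pow_dvd_sub hlin (by norm_num)]
    simp only [mul_add, coeff_add, mul_left_comm (eH d), coeff_natCast_mul]
  rw [hcoeff, ← factorial_mul_coeff_eH_mul_degreeFactor, ← factorial_mul_coeff_eH_mul_Fflex_sub_one,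
    ← factorial_mul_coeff_eH_mul_Nnode_sub_one]
  ring

/-- Example 4.1: the predegree of a degree-`d` curve with `n` ordinary nodes of the stated
type and otherwise only ordinary flexes. -/
theorem stmt_10 (d n : ℕ) (hd : 2 ≤ d) (hn : 6 * n ≤ 3 * d * (d - 2)) :
    (Nat.factorial 8 : ℚ) *
      ((eH (d : ℚ) * (1 - C (2 * (d : ℚ)) *
          (C (1 / 20 : ℚ) * X ^ 5 - C ((5 * (d : ℚ) + 18) / 360) * X ^ 6
            + C ((9 * (d : ℚ) + 8) / 420) * X ^ 7 - C ((d : ℚ) / 60) * X ^ 8)) *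
        Fflex ^ (3 * d * (d - 2) - 6 * n) * Nnode ^ n).coeff 8)
    = (d : ℚ) ^ 8 - 1372 * (d : ℚ) ^ 4 + 7992 * (d : ℚ) ^ 3 - 15879 * (d : ℚ) ^ 2
        + 10638 * (d : ℚ) - 24 * (n : ℚ) * (35 * (d : ℚ) ^ 2 - 174 * (d : ℚ) + 213) := by
  have hflexes : ((3 * d * (d - 2) - 6 * n : ℕ) : ℚ) = 3 * d * (d - 2) - 6 * n := by
    push_cast [hn, hd]
    ring
  refine (stmt_10_general d _ n).trans ?_
  rw [hflexes]
  ring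
end
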